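/- Let p > 2 and w(s) = (cosh s)^{-2/(p-2)}. Then ∫_ℝ w(s)^{2(2p-3)} ds = ( 16 p (p-1)(3p-4) / ((3p-2)(5p-6)(7p-10)) ) ∫_ℝ w(s)^p ds. -/

import Mathlib

open MeasureTheory

/-!
Integrating the derivative `(a + 1) cosh ^ (-(a + 2)) - a cosh ^ (-a)` of `sinh * cosh ^ (-a - 1)`
over the line gives a two-step recursion in the exponent for the integrals of `cosh ^ (-a)`.
The powers `w ^ p` and `w ^ (2 (2p - 3))` are `cosh ^ (-a)` and `cosh ^ (-(a + 6))` with
`a = 2p / (p - 2)`, so three applications of the recursion compare them.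
-/

theorem abs_sinh_le_cosh (s : ℝ) : |Real.sinh s| ≤ Real.cosh s := by
  rw [Real.abs_sinh, ← Real.cosh_abs]
  exact (Real.sinh_lt_cosh _).le

theorem exp_le_two_mul_cosh (s : ℝ) : Real.exp s ≤ 2 * Real.cosh s := by
  rw [Real.cosh_eq]
  linarith [Real.exp_pos (-s)]

theorem cosh_rpow_neg_le_exp {a : ℝ} (ha : 0 ≤ a) (s : ℝ) :
    Real.cosh s ^ (-a) ≤ 2 ^ a * Real.exp (-a * s) := by
  have two_cosh_le : (2 * Real.cosh s) ^ (-a) ≤ Real.exp s ^ (-a) :=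
    Real.rpow_le_rpow_of_nonpos (Real.exp_pos s) (exp_le_two_mul_cosh s) (neg_nonpos.mpr ha)
  calc Real.cosh s ^ (-a) = 2 ^ a * (2 * Real.cosh s) ^ (-a) := by
        rw [Real.mul_rpow zero_le_two (Real.cosh_pos s).le, ← mul_assoc,
          ← Real.rpow_add zero_lt_two, add_neg_cancel, Real.rpow_zero, one_mul]
    _ ≤ 2 ^ a * Real.exp s ^ (-a) := by gcongr
    _ = 2 ^ a * Real.exp (-a * s) := by rw [← Real.exp_mul, mul_comm s]

theorem continuous_cosh_rpow (r : ℝ) : Continuous fun s : ℝ => Real.cosh s ^ r :=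
  Real.continuous_cosh.rpow_const fun s => Or.inl (Real.cosh_pos s).ne'

theorem integrable_cosh_rpow_neg {a : ℝ} (ha : 0 < a) :
    Integrable fun s : ℝ => Real.cosh s ^ (-a) := by
  have isBigO_exp : (fun s : ℝ => Real.cosh s ^ (-a)) =O[Filter.atTop]
      fun s => Real.exp (-a * s) := by
    refine .of_bound (2 ^ a) (.of_forall fun s => ?_)
    rw [Real.norm_of_nonneg (Real.rpow_nonneg (Real.cosh_pos s).le _),
      Real.norm_of_nonneg (Real.exp_pos _).le]
    exact cosh_rpow_neg_le_exp ha.le s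
  refine (continuous_cosh_rpow (-a)).locallyIntegrable
    |>.integrable_of_isBigO_atTop_of_norm_isNegInvariant (.of_forall fun s => ?_) isBigO_exp
      ⟨Set.Ioi 0, Filter.Ioi_mem_atTop 0, exp_neg_integrableOn_Ioi 0 ha⟩
  simp only [Function.comp_apply, Real.cosh_neg]

theorem integrable_sinh_mul_cosh_rpow_neg {a : ℝ} (ha : 0 < a) :
    Integrable fun s : ℝ => Real.sinh s * Real.cosh s ^ (-a - 1) := by
  refine (integrable_cosh_rpow_neg ha).mono'
    (Real.continuous_sinh.mul (continuous_cosh_rpow _)).aestronglyMeasurable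
    (.of_forall fun s => ?_)
  have cosh_pos := Real.cosh_pos s
  calc ‖Real.sinh s * Real.cosh s ^ (-a - 1)‖
      = |Real.sinh s| * Real.cosh s ^ (-a - 1) := by
        rw [norm_mul, Real.norm_eq_abs, Real.norm_of_nonneg (by positivity)]
    _ ≤ Real.cosh s * Real.cosh s ^ (-a - 1) := by gcongr; exact abs_sinh_le_cosh s
    _ = Real.cosh s ^ (-a) := by rw [Real.rpow_sub_one cosh_pos.ne', mul_div_cancel₀ _ cosh_pos.ne']

theorem hasDerivAt_sinh_mul_cosh_rpow_neg (a s : ℝ) :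
    HasDerivAt (fun s => Real.sinh s * Real.cosh s ^ (-a - 1))
      ((a + 1) * Real.cosh s ^ (-(a + 2)) - a * Real.cosh s ^ (-a)) s := by
  have cosh_ne_zero := (Real.cosh_pos s).ne'
  have rpow_neg_sub_one : Real.cosh s ^ (-a - 1) = Real.cosh s ^ (-(a + 2)) * Real.cosh s := by
    rw [← Real.rpow_add_one cosh_ne_zero]
    ring_nf
  have rpow_neg : Real.cosh s ^ (-a) = Real.cosh s ^ (-(a + 2)) * Real.cosh s ^ 2 := by
    rw [← Real.rpow_add_natCast cosh_ne_zero]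
    push_cast
    ring_nf
  refine ((Real.hasDerivAt_sinh s).mul
    ((Real.hasDerivAt_cosh s).rpow_const (p := -a - 1) (Or.inl cosh_ne_zero))).congr_deriv ?_
  rw [show -a - 1 - 1 = -(a + 2) by ring, rpow_neg_sub_one, rpow_neg]
  linear_combination (a + 1) * Real.cosh s ^ (-(a + 2)) * Real.cosh_sq s

theorem integral_cosh_rpow_neg_add_two {a : ℝ} (ha : 0 < a) :
    ∫ s : ℝ, Real.cosh s ^ (-(a + 2)) = a / (a + 1) * ∫ s : ℝ, Real.cosh s ^ (-a) := by
  have integrable_left := (integrable_cosh_rpow_neg (add_pos ha two_pos)).const_mul (a + 1)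
  have integrable_right := (integrable_cosh_rpow_neg ha).const_mul a
  have integral_deriv := integral_eq_zero_of_hasDerivAt_of_integrable
    (hasDerivAt_sinh_mul_cosh_rpow_neg a) (integrable_left.sub integrable_right)
    (integrable_sinh_mul_cosh_rpow_neg ha)
  rw [integral_sub integrable_left integrable_right, integral_const_mul, integral_const_mul]
    at integral_deriv
  field_simp
  linarith

theorem integral_cosh_rpow_neg_add_two_mul_natCast {a : ℝ} (ha : 0 < a) (n : ℕ) :
    ∫ s : ℝ, Real.cosh s ^ (-(a + 2 * n)) =
      (∏ k ∈ Finset.range n, (a + 2 * k) / (a + 2 * k + 1)) * ∫ s : ℝ, Real.cosh s ^ (-a) := by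
  induction n with
  | zero => simp
  | succ n ih =>
    rw [Finset.prod_range_succ_comm, mul_assoc, ← ih,
      ← integral_cosh_rpow_neg_add_two (by positivity : 0 < a + 2 * n)]
    push_cast
    ring_nf

theorem prod_range_three_exponent_ratio {p : ℝ} (hp : p - 2 ≠ 0) :
    ∏ k ∈ Finset.range 3, (2 * p / (p - 2) + 2 * k) / (2 * p / (p - 2) + 2 * k + 1) =
      16 * p * (p - 1) * (3 * p - 4) / ((3 * p - 2) * (5 * p - 6) * (7 * p - 10)) := by
  have clear_denominators (k : ℝ) :
      (2 * p / (p - 2) + 2 * k) / (2 * p / (p - 2) + 2 * k + 1) =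
        (2 * p + 2 * k * (p - 2)) / (2 * p + (2 * k + 1) * (p - 2)) := by
    rw [← mul_div_mul_right _ _ hp]
    congr 1 <;> field_simp
    ring
  simp only [clear_denominators, Finset.prod_range_succ, Finset.prod_range_zero, one_mul,
    div_mul_div_comm]
  push_cast
  congr 1 <;> ring

theorem statement15_general (p : ℝ) (hp : p < 0 ∨ 2 < p)
    (w : ℝ → ℝ) (hw : ∀ s, w s = Real.cosh s ^ (-(2 / (p - 2)))) :
    (∫ s : ℝ, w s ^ (2 * (2 * p - 3))) =
      16 * p * (p - 1) * (3 * p - 4) / ((3 * p - 2) * (5 * p - 6) * (7 * p - 10)) *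
        ∫ s : ℝ, w s ^ p := by
  have sub_two_ne_zero : p - 2 ≠ 0 := by rcases hp with hp | hp <;> linarith
  have exponent_pos : 0 < 2 * p / (p - 2) := by
    rcases hp with p_neg | two_lt_p
    · exact div_pos_of_neg_of_neg (by linarith) (by linarith)
    · exact div_pos (by linarith) (by linarith)
  have w_rpow (r s : ℝ) : w s ^ r = Real.cosh s ^ (-(2 * r / (p - 2))) := by
    rw [hw, ← Real.rpow_mul (Real.cosh_pos s).le]
    ring_nf
  have exponent_shift : 2 * (2 * (2 * p - 3)) / (p - 2) = 2 * p / (p - 2) + 2 * (3 : ℕ) := by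
    push_cast
    field_simp
    ring
  simp_rw [w_rpow, exponent_shift]
  rw [integral_cosh_rpow_neg_add_two_mul_natCast exponent_pos,
    prod_range_three_exponent_ratio sub_two_ne_zero]

/-- For `p > 2` and `w(s) = (cosh s)^{-2/(p-2)}`, one has
`∫ w^{2(2p-3)} = (16p(p-1)(3p-4)/((3p-2)(5p-6)(7p-10))) ∫ w^p`. -/
theorem statement15 (p : ℝ) (hp : 2 < p)
    (w : ℝ → ℝ) (hw : ∀ s, w s = Real.cosh s ^ (-(2 / (p - 2)))) :
    (∫ s : ℝ, w s ^ (2 * (2 * p - 3))) =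
      16 * p * (p - 1) * (3 * p - 4) / ((3 * p - 2) * (5 * p - 6) * (7 * p - 10)) *
        ∫ s : ℝ, w s ^ p :=
  statement15_general p (Or.inr hp) w hw
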